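/- Let τ be a symmetric 2×2 complex matrix with positive definite imaginary part and write θ[ε] for the genus-2 theta constant θ[ε](0|τ). Then θ²[00;00]·θ²[10;00] = θ²[01;00]·θ²[11;00] + θ²[00;01]·θ²[10;01]. -/

import Mathlib

/-- Genus-2 Riemann theta function with characteristic `[a b; c d]`
(`(a,b) = ε'`, `(c,d) = ε''`), evaluated at `z = (z1, z2)` and period matrix
`τ = ((t11, t12), (t12, t22))`. -/
noncomputable def theta2 (a b c d : ℝ) (z1 z2 t11 t12 t22 : ℂ) : ℂ :=
  ∑' m : ℤ × ℤ,
    Complex.exp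
      ((Real.pi : ℂ) * Complex.I *
          (((m.1 : ℂ) + (a : ℂ) / 2) *
              (((m.1 : ℂ) + (a : ℂ) / 2) * t11 + ((m.2 : ℂ) + (b : ℂ) / 2) * t12) +
            ((m.2 : ℂ) + (b : ℂ) / 2) *
              (((m.1 : ℂ) + (a : ℂ) / 2) * t12 + ((m.2 : ℂ) + (b : ℂ) / 2) * t22)) +
        2 * (Real.pi : ℂ) * Complex.I *
          (((m.1 : ℂ) + (a : ℂ) / 2) * (z1 + (c : ℂ) / 2) +
            ((m.2 : ℂ) + (b : ℂ) / 2) * (z2 + (d : ℂ) / 2)))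

/-- The symmetric matrix `τ = ((t11, t12), (t12, t22))` has positive definite
imaginary part. -/
def posDefIm (t11 t12 t22 : ℂ) : Prop :=
  (!![t11.im, t12.im; t12.im, t22.im]).PosDef

noncomputable def gq (t11 t12 t22 : ℂ) (x : ℤ × ℤ) : ℂ :=
  Complex.exp ((Real.pi : ℂ) * Complex.I *
    ((x.1 : ℂ) ^ 2 * t11 + 2 * (x.1 : ℂ) * (x.2 : ℂ) * t12 + (x.2 : ℂ) ^ 2 * t22))

theorem summable_gauss_int (c : ℝ) (hc : 0 < c) :
    Summable (fun n : ℤ => Real.exp (-Real.pi * c * (n : ℝ) ^ 2)) := by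
  have h := (summable_jacobiTheta₂_term_iff 0 (Complex.I * c)).2 (by simpa using hc)
  have h2 := h.norm
  refine h2.congr (fun n => ?_)
  rw [norm_jacobiTheta₂_term]
  simp
  ring

theorem posDefIm_pos {t11 t12 t22 : ℂ} (h : posDefIm t11 t12 t22) :
    0 < t11.im + t22.im ∧ 0 < t11.im * t22.im - t12.im ^ 2 := by
  unfold posDefIm at h
  have h1 := h.diag_pos (i := 0)
  have h2 := h.diag_pos (i := 1)
  have h3 := h.det_pos
  simp [Matrix.det_fin_two] at h1 h2 h3
  constructor
  · linarith
  · nlinarith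

theorem norm_gq (t11 t12 t22 : ℂ) (x : ℤ × ℤ) : ‖gq t11 t12 t22 x‖ =
    Real.exp (-Real.pi * ((x.1 : ℝ) ^ 2 * t11.im + 2 * x.1 * x.2 * t12.im + (x.2 : ℝ) ^ 2 * t22.im)) := by
  unfold gq
  rw [Complex.norm_exp]
  congr 1
  have : (Real.pi : ℂ) * Complex.I *
    ((x.1 : ℂ) ^ 2 * t11 + 2 * (x.1 : ℂ) * (x.2 : ℂ) * t12 + (x.2 : ℂ) ^ 2 * t22) =
    (Real.pi : ℂ) * (Complex.I *
    ((((x.1 : ℝ) ^ 2 : ℝ) : ℂ) * t11 + ((2 * (x.1 : ℝ) * (x.2 : ℝ) : ℝ) : ℂ) * t12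
      + (((x.2 : ℝ) ^ 2 : ℝ) : ℂ) * t22)) := by
    push_cast; ring
  rw [this, Complex.re_ofReal_mul, Complex.I_mul_re, Complex.add_im, Complex.add_im,
    Complex.im_ofReal_mul, Complex.im_ofReal_mul, Complex.im_ofReal_mul]
  ring

theorem summable_norm_gq {t11 t12 t22 : ℂ} (h : posDefIm t11 t12 t22) :
    Summable (fun x => ‖gq t11 t12 t22 x‖) := by
  obtain ⟨h1, h2⟩ := posDefIm_pos h
  set δ := (t11.im * t22.im - t12.im ^ 2) / (t11.im + t22.im) with hδ
  have hδ0 : 0 < δ := div_pos h2 h1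
  have hs := summable_gauss_int δ hδ0
  have := hs.mul_of_nonneg hs (fun n => (Real.exp_pos _).le) (fun n => (Real.exp_pos _).le)
  refine Summable.of_nonneg_of_le (fun x => norm_nonneg _) (fun x => ?_) this
  rw [norm_gq, ← Real.exp_add, Real.exp_le_exp]
  have key : δ * ((x.1 : ℝ) ^ 2 + (x.2 : ℝ) ^ 2) ≤
      (x.1 : ℝ) ^ 2 * t11.im + 2 * x.1 * x.2 * t12.im + (x.2 : ℝ) ^ 2 * t22.im := by
    rw [hδ, div_mul_eq_mul_div, div_le_iff₀ h1]
    nlinarith [sq_nonneg (t11.im * x.1 + t12.im * x.2), sq_nonneg (t12.im * x.1 + t22.im * x.2)]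
  have := mul_le_mul_of_nonneg_left key Real.pi_pos.le
  linarith

theorem posDefIm_scale {t11 t12 t22 : ℂ} (h : posDefIm t11 t12 t22) (c : ℝ) (hc : 0 < c) :
    posDefIm (c * t11) (c * t12) (c * t22) := by
  unfold posDefIm at *
  have := h.smul hc
  convert this using 1
  ext i j
  fin_cases i <;> fin_cases j <;> simp

def dbl (s1 s2 : ℤ) (p : ℤ × ℤ) : ℤ × ℤ := (2 * p.1 + s1, 2 * p.2 + s2)

theorem dbl_inj (s1 s2 : ℤ) : Function.Injective (dbl s1 s2) := by
  rintro ⟨a, b⟩ ⟨c, d⟩ h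
  simp only [dbl, Prod.mk.injEq] at h ⊢
  omega

theorem summable_norm_gq_dbl {t11 t12 t22 : ℂ} (h : posDefIm t11 t12 t22) (c : ℝ) (hc : 0 < c)
    (s1 s2 : ℤ) :
    Summable (fun x => ‖gq (c * t11) (c * t12) (c * t22) (dbl s1 s2 x)‖) :=
  (summable_norm_gq (posDefIm_scale h c hc)).comp_injective (dbl_inj s1 s2)

noncomputable def ThH (t11 t12 t22 : ℂ) (s1 s2 : ℤ) : ℂ :=
  ∑' p : ℤ × ℤ, gq (((1 / 2 : ℝ) : ℂ) * t11) (((1 / 2 : ℝ) : ℂ) * t12) (((1 / 2 : ℝ) : ℂ) * t22) (dbl s1 s2 p)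

theorem ThH_shift (t11 t12 t22 : ℂ) (s1 s2 k l : ℤ) :
    ThH t11 t12 t22 (s1 + 2 * k) (s2 + 2 * l) = ThH t11 t12 t22 s1 s2 := by
  unfold ThH
  rw [← (Equiv.addRight ((k, l) : ℤ × ℤ)).tsum_eq
    (fun p => gq (((1 / 2 : ℝ) : ℂ) * t11) (((1 / 2 : ℝ) : ℂ) * t12) (((1 / 2 : ℝ) : ℂ) * t22) (dbl s1 s2 p))]
  refine tsum_congr (fun p => ?_)
  congr 1
  simp only [dbl, Equiv.coe_addRight, Prod.fst_add, Prod.snd_add, Prod.mk.injEq]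
  constructor <;> ring

def mixf (x : (Fin 2 × Fin 2) × ((ℤ × ℤ) × (ℤ × ℤ))) : (ℤ × ℤ) × (ℤ × ℤ) :=
  ((x.2.1.1 + x.2.2.1 + (x.1.1.val : ℤ), x.2.1.2 + x.2.2.2 + (x.1.2.val : ℤ)),
    (x.2.1.1 - x.2.2.1, x.2.1.2 - x.2.2.2))

theorem mixf_bij : Function.Bijective mixf := by
  constructor
  · rintro ⟨⟨⟨s1, h1⟩, ⟨s2, h2⟩⟩, ⟨⟨p1, p2⟩, ⟨q1, q2⟩⟩⟩ ⟨⟨⟨s1', h1'⟩, ⟨s2', h2'⟩⟩, ⟨⟨p1', p2'⟩, ⟨q1', q2'⟩⟩⟩ h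
    simp only [mixf, Prod.mk.injEq, Fin.mk.injEq] at h ⊢
    omega
  · rintro ⟨⟨m1, m2⟩, ⟨n1, n2⟩⟩
    refine ⟨((⟨((m1 - n1) % 2).toNat, by omega⟩, ⟨((m2 - n2) % 2).toNat, by omega⟩),
      ((n1 + (m1 - n1) / 2, n2 + (m2 - n2) / 2), ((m1 - n1) / 2, (m2 - n2) / 2))), ?_⟩
    simp only [mixf, Prod.mk.injEq]
    omega

noncomputable def thT (t11 t12 t22 : ℂ) (a b d : ℤ) (m : ℤ × ℤ) : ℂ :=
  gq (((1 / 4 : ℝ) : ℂ) * t11) (((1 / 4 : ℝ) : ℂ) * t12) (((1 / 4 : ℝ) : ℂ) * t22) (dbl a b m) *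
    Complex.exp ((Real.pi : ℂ) * Complex.I * (((2 * m.2 + b) * d : ℤ) / 2 : ℂ))

theorem theta2_eq (t11 t12 t22 : ℂ) (a b d : ℤ) :
    theta2 a b 0 d 0 0 t11 t12 t22 = ∑' m, thT t11 t12 t22 a b d m := by
  unfold theta2 thT gq dbl
  refine tsum_congr (fun m => ?_)
  rw [← Complex.exp_add]
  congr 1
  push_cast
  ring

theorem summable_norm_thT {t11 t12 t22 : ℂ} (h : posDefIm t11 t12 t22) (a b d : ℤ) :
    Summable (fun m => ‖thT t11 t12 t22 a b d m‖) := by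
  refine (summable_norm_gq_dbl h (1 / 4) (by norm_num) a b).congr (fun m => ?_)
  unfold thT
  rw [norm_mul]
  have : ‖Complex.exp ((Real.pi : ℂ) * Complex.I * (((2 * m.2 + b) * d : ℤ) / 2 : ℂ))‖ = 1 := by
    have := Complex.norm_exp_ofReal_mul_I (Real.pi * (((2 * m.2 + b) * d : ℤ) / 2))
    rw [← this]
    congr 2
    push_cast
    ring
  rw [this, mul_one]

theorem thT_mul (t11 t12 t22 : ℂ) (a b d : ℤ) (s : Fin 2 × Fin 2) (p q : ℤ × ℤ) :
    thT t11 t12 t22 a b d (mixf (s, (p, q))).1 * thT t11 t12 t22 a b d (mixf (s, (p, q))).2 =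
    Complex.exp ((Real.pi : ℂ) * Complex.I * ((((s.2.val : ℤ) + b) * d : ℤ) : ℂ)) *
    (gq (((1 / 2 : ℝ) : ℂ) * t11) (((1 / 2 : ℝ) : ℂ) * t12) (((1 / 2 : ℝ) : ℂ) * t22)
        (dbl (s.1.val + a) (s.2.val + b) p) *
      gq (((1 / 2 : ℝ) : ℂ) * t11) (((1 / 2 : ℝ) : ℂ) * t12) (((1 / 2 : ℝ) : ℂ) * t22)
        (dbl s.1.val s.2.val q)) := by
  unfold thT gq
  simp only [← Complex.exp_add]
  rw [Complex.exp_eq_exp_iff_exists_int]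
  refine ⟨p.2 * d, ?_⟩
  simp only [mixf, dbl]
  push_cast
  ring

theorem theta2_sq {t11 t12 t22 : ℂ} (h : posDefIm t11 t12 t22) (a b d : ℤ) :
    theta2 a b 0 d 0 0 t11 t12 t22 ^ 2 = ∑ s : Fin 2 × Fin 2,
      Complex.exp ((Real.pi : ℂ) * Complex.I * ((((s.2.val : ℤ) + b) * d : ℤ) : ℂ)) *
      (ThH t11 t12 t22 (s.1.val + a) (s.2.val + b) * ThH t11 t12 t22 s.1.val s.2.val) := by
  have hs := summable_norm_thT h a b d
  have hs2 := summable_mul_of_summable_norm hs hs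
  rw [theta2_eq, sq, tsum_mul_tsum_of_summable_norm hs hs,
    ← (Equiv.ofBijective mixf mixf_bij).tsum_eq]
  have hs3 := (Equiv.ofBijective mixf mixf_bij).summable_iff.2 hs2
  refine (Summable.tsum_prod hs3).trans ?_
  rw [tsum_fintype]
  refine Finset.sum_congr rfl (fun s _ => ?_)
  unfold ThH
  rw [tsum_mul_tsum_of_summable_norm (summable_norm_gq_dbl h (1 / 2) (by norm_num) _ _)
    (summable_norm_gq_dbl h (1 / 2) (by norm_num) _ _), ← tsum_mul_left]
  refine tsum_congr (fun x => ?_)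
  exact thT_mul t11 t12 t22 a b d s x.1 x.2

/-- **A relation between squares of even genus-2 theta constants.**
`θ²[00;00]·θ²[10;00] = θ²[01;00]·θ²[11;00] + θ²[00;01]·θ²[10;01]`. -/
theorem theta_constants_squares_rel (t11 t12 t22 : ℂ) (hτ : posDefIm t11 t12 t22) :
    theta2 0 0 0 0 0 0 t11 t12 t22 ^ 2 * theta2 1 0 0 0 0 0 t11 t12 t22 ^ 2 =
      theta2 0 1 0 0 0 0 t11 t12 t22 ^ 2 * theta2 1 1 0 0 0 0 t11 t12 t22 ^ 2
        + theta2 0 0 0 1 0 0 t11 t12 t22 ^ 2 * theta2 1 0 0 1 0 0 t11 t12 t22 ^ 2 := by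
  have e0 := theta2_sq hτ 0 0 0
  have e1 := theta2_sq hτ 1 0 0
  have e2 := theta2_sq hτ 0 1 0
  have e3 := theta2_sq hτ 1 1 0
  have e4 := theta2_sq hτ 0 0 1
  have e5 := theta2_sq hτ 1 0 1
  have f1 := fun s => ThH_shift t11 t12 t22 0 s 1 0
  have f2 := fun s => ThH_shift t11 t12 t22 s 0 0 1
  have f3 := ThH_shift t11 t12 t22 0 0 1 1
  norm_num at f1 f2 f3
  simp [Fintype.sum_prod_type, Fin.sum_univ_two, Complex.exp_pi_mul_I, f1, f2, f3,
    one_add_one_eq_two] at e0 e1 e2 e3 e4 e5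
  rw [e0, e1, e2, e3, e4, e5]
  ring
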